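/- In the block matrix setup, assume additionally that T₁ is tridiagonal ((T₁)_{ij} = 0 for |i−j| > 1) with positive subdiagonal entries (T₁)_{i+1,i} > 0 for i = 1,…,m−1, and let μ be a positive Borel measure on [0,∞) with ∫_{[0,∞)} 1/(1+t) dμ(t) < ∞. Define f₂(z) := ∫_{[0,∞)} (ε(t) / (β d(t))) · 1/(z+t) dμ(t) for z > 0. Then (−1)^{m} f₂ is a Stieltjes function: there exists a positive Borel measure ν on [0,∞) with ∫_{[0,∞)} 1/(1+t) dν(t) < ∞ such that (−1)^{m} f₂(z) = ∫_{[0,∞)} 1/(z+t) dν(t) for all z > 0. In particular, f₂ has constant sign on (0,∞) and |f₂| is monotonically decreasing on (0,∞). -/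

import Mathlib

open MeasureTheory Matrix

/-!
Put `A = T₁ + tI`, `D = S + tI` and let `P` be the product of the subdiagonal entries of `T₁`.
Deleting the first row and the last column of `A` leaves a triangular matrix with diagonal product
`P`, so Cramer's rule gives `ε(t) = (-1)^(m-1) P / det A`. Since `T + tI` couples `A` and `D`
through a single entry, `det (T + tI) = det A * det D * (1 - β² γ(t) δ(t))`. Dividing,

  `ε(t) / (β d(t)) = (-1)^m β P det (S + tI) / det (T + tI)`.

Up to the sign `(-1)^m` the right-hand side is positive, and it is bounded on `[0, ∞)` because the
denominator has no zero there and the larger degree in `t`. It is therefore a density by which `μ`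
may be reweighted.
-/

section Hessenberg

variable {R : Type*} [CommRing R] {n : ℕ}

/-- A square matrix is upper Hessenberg if it vanishes below its first subdiagonal; this half of
tridiagonality already determines the bottom-left entry of the adjugate. Indices are compared in
`ℕ`, so that the successor does not wrap around in `Fin n`. -/
def IsUpperHessenberg (A : Matrix (Fin n) (Fin n) R) : Prop :=
  ∀ ⦃i j : Fin n⦄, (j : ℕ) + 1 < i → A i j = 0

/-- The product of the entries on the first subdiagonal of a square matrix, which for an upper
Hessenberg matrix is the minor obtained by deleting the first row and the last column. -/
def subdiagProd (A : Matrix (Fin (n + 1)) (Fin (n + 1)) R) : R :=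
  ∏ i : Fin n, A i.succ i.castSucc

theorem IsUpperHessenberg.add_smul_one {A : Matrix (Fin n) (Fin n) R} (hA : IsUpperHessenberg A)
    (t : R) : IsUpperHessenberg (A + t • 1) := by
  intro i j hij
  have hne : i ≠ j := by rintro rfl; omega
  simp [hA hij, one_apply_ne hne]

theorem subdiagProd_add_smul_one (A : Matrix (Fin (n + 1)) (Fin (n + 1)) R) (t : R) :
    subdiagProd (A + t • 1) = subdiagProd A := by
  simp [subdiagProd, one_apply_ne Fin.castSucc_lt_succ.ne']

theorem IsUpperHessenberg.adjugate_last_zero {A : Matrix (Fin (n + 1)) (Fin (n + 1)) R}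
    (hA : IsUpperHessenberg A) : A.adjugate (Fin.last n) 0 = (-1) ^ n * subdiagProd A := by
  have htri : (A.submatrix Fin.succ Fin.castSucc).IsUpperTriangular :=
    fun i j hij => hA (by simpa using hij)
  simp [adjugate_fin_succ_eq_det_submatrix, Fin.succAbove_last,
    det_of_isUpperTriangular htri, subdiagProd]

theorem IsUpperHessenberg.inv_last_zero {K : Type*} [Field K]
    {A : Matrix (Fin (n + 1)) (Fin (n + 1)) K} (hA : IsUpperHessenberg A) :
    A⁻¹ (Fin.last n) 0 = (-1) ^ n * subdiagProd A / A.det := by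
  rw [inv_def, Ring.inverse_eq_inv', Matrix.smul_apply, smul_eq_mul, hA.adjugate_last_zero,
    inv_mul_eq_div]

end Hessenberg

section BlockDeterminant

variable {R m n : Type*} [DecidableEq m] [DecidableEq n]

theorem fromBlocks_add_smul_one [Semiring R] (A : Matrix m m R) (B : Matrix m n R)
    (C : Matrix n m R) (D : Matrix n n R) (t : R) :
    fromBlocks A B C D + t • 1 = fromBlocks (A + t • 1) B C (D + t • 1) := by
  simp [← fromBlocks_one, fromBlocks_smul, fromBlocks_add]

variable [CommRing R] [Fintype m] [Fintype n]

theorem det_add_single (A : Matrix n n R) (i j : n) (c : R) :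
    (A + single i j c).det = A.det + c * A.adjugate j i := by
  have hrow : A + single i j c = A.updateRow i (A i + c • Pi.single j 1) := by
    ext k l
    by_cases hk : k = i
    · subst hk
      simp [single_apply, Pi.single_apply, eq_comm]
    · simp [hk, Ne.symm hk]
  rw [hrow, det_updateRow_add, det_updateRow_smul, updateRow_eq_self, adjugate_apply]

theorem det_fromBlocks_single_single {A : Matrix m m R} {D : Matrix n n R}
    (hA : IsUnit A.det) (hD : IsUnit D.det) (i i' : m) (j j' : n) (b c : R) :
    (fromBlocks A (single i j b) (single j' i' c) D).det =
      A.det * D.det * (1 - b * c * (A⁻¹ i' i * D⁻¹ j j')) := by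
  have := A.invertibleOfIsUnitDet hA
  have hschur : D - single j' i' c * ⅟A * single i j b =
      D + single j' j (-(c * A⁻¹ i' i * b)) := by
    rw [invOf_eq_nonsing_inv, single_mul_mul_single, sub_eq_add_neg, ← single_neg]
  have hadj : D.adjugate j j' = D.det * D⁻¹ j j' := by
    rw [inv_def, Matrix.smul_apply, smul_eq_mul, ← mul_assoc, Ring.mul_inverse_cancel _ hD, one_mul]
  rw [det_fromBlocks₁₁, hschur, det_add_single, hadj]
  ring

theorem IsUpperHessenberg.inv_last_zero_div_eq {K : Type*} [Field K] {r : ℕ}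
    {A : Matrix (Fin (r + 1)) (Fin (r + 1)) K} (hA : IsUpperHessenberg A) {D : Matrix n n K}
    (hAdet : A.det ≠ 0) (hDdet : D.det ≠ 0) (j : n) {b : K} (hb : b ≠ 0) :
    A⁻¹ (Fin.last r) 0 / (b * (A⁻¹ (Fin.last r) (Fin.last r) * D⁻¹ j j - 1 / b ^ 2)) =
      (-1) ^ (r + 1) * (b * subdiagProd A *
        (D.det / (fromBlocks A (single (Fin.last r) j b) (single j (Fin.last r) b) D).det)) := by
  have hdenom (x : K) : b * (x - 1 / b ^ 2) = -(1 - b * b * x) / b := by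
    field_simp
    ring
  rw [hA.inv_last_zero, hdenom, det_fromBlocks_single_single hAdet.isUnit hDdet.isUnit, pow_succ]
  generalize 1 - b * b * _ = s
  rcases eq_or_ne s 0 with rfl | hs
  · simp
  · field_simp

end BlockDeterminant

section DeterminantRatio

theorem exists_norm_eval_div_eval_le {p q : Polynomial ℝ} (hdeg : p.degree ≤ q.degree) {a : ℝ}
    (hq : ∀ t ∈ Set.Ici a, q.eval t ≠ 0) :
    ∃ C : ℝ, ∀ t ∈ Set.Ici a, ‖p.eval t / q.eval t‖ ≤ C := by
  obtain ⟨c, hc⟩ := (Polynomial.isBigO_atTop_of_degree_le p q hdeg).bound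
  obtain ⟨r, hr⟩ := Filter.eventually_atTop.1 hc
  have hcont : ContinuousOn (fun t => p.eval t / q.eval t) (Set.Icc a r) :=
    p.continuousOn.div q.continuousOn fun t ht => hq t ht.1
  obtain ⟨b, hb⟩ := isCompact_Icc.exists_bound_of_continuousOn hcont
  refine ⟨max b c, fun t ht => ?_⟩
  rcases le_total t r with htr | hrt
  · exact (hb t ⟨ht, htr⟩).trans (le_max_left _ _)
  · rw [norm_div, div_le_iff₀ (norm_pos_iff.2 (hq t ht))]
    exact (hr t hrt).trans (by gcongr; exact le_max_right _ _)

variable {m n : Type*} [Fintype m] [DecidableEq m] [Fintype n] [DecidableEq n]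

theorem eval_charpoly_neg {R : Type*} [CommRing R] (A : Matrix n n R) (t : R) :
    (-A).charpoly.eval t = (A + t • 1).det := by
  rw [eval_charpoly, sub_neg_eq_add, add_comm, smul_one_eq_diagonal, scalar_apply]

theorem exists_norm_det_div_det_le (B : Matrix m m ℝ) {A : Matrix n n ℝ}
    (hcard : Fintype.card m ≤ Fintype.card n) {a : ℝ}
    (hA : ∀ t ∈ Set.Ici a, (A + t • 1).det ≠ 0) :
    ∃ C : ℝ, ∀ t ∈ Set.Ici a, ‖(B + t • 1).det / (A + t • 1).det‖ ≤ C := by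
  simp only [← eval_charpoly_neg] at hA ⊢
  refine exists_norm_eval_div_eval_le ?_ hA
  simpa only [charpoly_degree_eq_dim, Nat.cast_le] using hcard

theorem det_add_smul_one_pos_of_posDef {A : Matrix n n ℝ} (hA : A.PosDef) {t : ℝ}
    (ht : 0 ≤ t) : 0 < (A + t • 1).det :=
  (hA.add_posSemidef (PosSemidef.one.smul ht)).det_pos

end DeterminantRatio

section Stieltjes

/-- A Stieltjes function: on `(0, ∞)` it is `z ↦ ∫ (z + t)⁻¹ dν(t)` for a positive measure `ν` on
`[0, ∞)` integrating `(1 + t)⁻¹`. The measure lives on `ℝ` and only its restriction to `[0, ∞)`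
matters; the values of `f` outside `(0, ∞)` are unconstrained. This is unrelated to
`StieltjesFunction`, Mathlib's right-continuous monotone functions. -/
def IsStieltjes (f : ℝ → ℝ) : Prop :=
  ∃ ν : Measure ℝ, IntegrableOn (fun t => (1 + t)⁻¹) (Set.Ici 0) ν ∧
    ∀ z : ℝ, 0 < z → f z = ∫ t in Set.Ici (0 : ℝ), (z + t)⁻¹ ∂ν

theorem integrableOn_inv_add {μ : Measure ℝ}
    (hμ : IntegrableOn (fun t => (1 + t)⁻¹) (Set.Ici 0) μ) {z : ℝ} (hz : 0 < z) :
    IntegrableOn (fun t => (z + t)⁻¹) (Set.Ici 0) μ := by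
  refine Integrable.mono' (hμ.const_mul (max 1 z⁻¹)) (by fun_prop) ?_
  filter_upwards [ae_restrict_mem measurableSet_Ici] with t (ht : 0 ≤ t)
  have hzt : 1 + t ≤ max 1 z⁻¹ * (z + t) := by
    calc 1 + t = z⁻¹ * z + 1 * t := by rw [inv_mul_cancel₀ hz.ne', one_mul]
      _ ≤ max 1 z⁻¹ * z + max 1 z⁻¹ * t := by gcongr <;> simp
      _ = max 1 z⁻¹ * (z + t) := by ring
  rw [Real.norm_of_nonneg (by positivity), ← div_eq_mul_inv, le_div_iff₀ (by positivity),
    inv_mul_le_iff₀ (by positivity)]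
  linarith

namespace IsStieltjes

variable {f g : ℝ → ℝ}

theorem congr (hf : IsStieltjes f) (hfg : Set.EqOn f g (Set.Ioi 0)) : IsStieltjes g := by
  obtain ⟨ν, hν, hfν⟩ := hf
  exact ⟨ν, hν, fun z hz => (hfg hz).symm.trans (hfν z hz)⟩

theorem nonneg (hf : IsStieltjes f) {z : ℝ} (hz : 0 < z) : 0 ≤ f z := by
  obtain ⟨ν, -, hfν⟩ := hf
  rw [hfν z hz]
  exact setIntegral_nonneg measurableSet_Ici fun t ht => inv_nonneg.2 (add_nonneg hz.le ht)

theorem antitoneOn (hf : IsStieltjes f) : AntitoneOn f (Set.Ioi 0) := by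
  obtain ⟨ν, hν, hfν⟩ := hf
  intro x (hx : 0 < x) y (hy : 0 < y) hxy
  rw [hfν x hx, hfν y hy]
  refine setIntegral_mono_on (integrableOn_inv_add hν hy) (integrableOn_inv_add hν hx)
    measurableSet_Ici fun t (ht : 0 ≤ t) => ?_
  gcongr

theorem nonneg_or_nonpos_of_const_mul {c : ℝ} (hc : c ≠ 0) (hf : IsStieltjes fun z => c * f z) :
    (∀ z, 0 < z → 0 ≤ f z) ∨ ∀ z, 0 < z → f z ≤ 0 := by
  rcases hc.lt_or_gt with hneg | hpos
  · exact .inr fun z hz => nonpos_of_mul_nonneg_right (hf.nonneg hz) hneg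
  · exact .inl fun z hz => nonneg_of_mul_nonneg_right (hf.nonneg hz) hpos

theorem antitoneOn_abs_of_const_mul {c : ℝ} (hc : c ≠ 0) (hf : IsStieltjes fun z => c * f z) :
    AntitoneOn (fun z => |f z|) (Set.Ioi 0) := by
  intro x hx y hy hxy
  have habs {z : ℝ} (hz : z ∈ Set.Ioi 0) : |c| * |f z| = c * f z := by
    rw [← abs_mul, abs_of_nonneg (hf.nonneg hz)]
  refine le_of_mul_le_mul_left ?_ (abs_pos.2 hc)
  simpa only [habs hx, habs hy] using hf.antitoneOn hx hy hxy

end IsStieltjes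

variable {μ : Measure ℝ} {w : ℝ → ℝ}

theorem isStieltjes_integral_mul_inv_add (hw : AEMeasurable w (μ.restrict (Set.Ici 0)))
    (hw_nonneg : ∀ t ∈ Set.Ici 0, 0 ≤ w t)
    (hint : IntegrableOn (fun t => w t * (1 + t)⁻¹) (Set.Ici 0) μ) :
    IsStieltjes fun z => ∫ t in Set.Ici 0, w t * (z + t)⁻¹ ∂μ := by
  have hsmul (z : ℝ) : Set.EqOn (fun t => w t * (z + t)⁻¹)
      (fun t => (ENNReal.ofReal (w t)).toReal • (z + t)⁻¹) (Set.Ici 0) := fun t ht => by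
    simp only [ENNReal.toReal_ofReal (hw_nonneg t ht), smul_eq_mul]
  refine ⟨μ.withDensity fun t => ENNReal.ofReal (w t), ?_, fun z _ => ?_⟩
  · rw [IntegrableOn, restrict_withDensity measurableSet_Ici,
      integrable_withDensity_iff_integrable_smul₀' hw.ennreal_ofReal (by simp)]
    exact hint.congr_fun (hsmul 1) measurableSet_Ici
  · rw [setIntegral_withDensity_eq_setIntegral_toReal_smul₀ hw.ennreal_ofReal (by simp) _
      measurableSet_Ici]
    exact setIntegral_congr_fun measurableSet_Ici (hsmul z)

theorem isStieltjes_integral_det_div_det {m n : Type*} [Fintype m] [DecidableEq m] [Fintype n]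
    [DecidableEq n] {B : Matrix m m ℝ} {A : Matrix n n ℝ} (hB : B.PosDef) (hA : A.PosDef)
    (hcard : Fintype.card m ≤ Fintype.card n)
    (hμ : IntegrableOn (fun t => (1 + t)⁻¹) (Set.Ici 0) μ) {c : ℝ} (hc : 0 ≤ c) :
    IsStieltjes fun z =>
      ∫ t in Set.Ici 0, c * ((B + t • 1).det / (A + t • 1).det) * (z + t)⁻¹ ∂μ := by
  obtain ⟨C, hC⟩ := exists_norm_det_div_det_le B hcard (a := 0)
    fun t ht => (det_add_smul_one_pos_of_posDef hA ht).ne'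
  have hmeas : Measurable fun t : ℝ => (B + t • 1).det / (A + t • 1).det :=
    (Continuous.matrix_det (by fun_prop)).measurable.div
      (Continuous.matrix_det (by fun_prop)).measurable
  have hnonneg (t : ℝ) (ht : t ∈ Set.Ici 0) : 0 ≤ (B + t • 1).det / (A + t • 1).det :=
    div_nonneg (det_add_smul_one_pos_of_posDef hB ht).le (det_add_smul_one_pos_of_posDef hA ht).le
  have hint : IntegrableOn (fun t => (B + t • 1).det / (A + t • 1).det * (1 + t)⁻¹)
      (Set.Ici 0) μ :=
    hμ.bdd_mul (c := C) hmeas.aestronglyMeasurable ((ae_restrict_mem measurableSet_Ici).mono hC)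
  refine isStieltjes_integral_mul_inv_add (hmeas.const_mul c).aemeasurable
    (fun t ht => mul_nonneg hc (hnonneg t ht)) ?_
  simpa only [IntegrableOn, mul_assoc] using hint.const_mul c

theorem isStieltjes_neg_one_pow_mul_integral_inv_last_zero_div {κ : Type*} [Fintype κ]
    [DecidableEq κ] {r : ℕ} {A : Matrix (Fin (r + 1)) (Fin (r + 1)) ℝ} {D : Matrix κ κ ℝ} {j : κ}
    {b : ℝ} (hb : 0 < b)
    (hpd : (fromBlocks A (single (Fin.last r) j b) (single j (Fin.last r) b) D).PosDef)
    (hhess : IsUpperHessenberg A) (hsub : 0 ≤ subdiagProd A)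
    (hμ : IntegrableOn (fun t => (1 + t)⁻¹) (Set.Ici 0) μ) :
    IsStieltjes fun z => (-1) ^ (r + 1) * ∫ t in Set.Ici 0,
      (A + t • 1)⁻¹ (Fin.last r) 0 / (b * ((A + t • 1)⁻¹ (Fin.last r) (Fin.last r) *
        (D + t • 1)⁻¹ j j - 1 / b ^ 2)) * (z + t)⁻¹ ∂μ := by
  have hA : A.PosDef := hpd.submatrix Sum.inl_injective
  have hD : D.PosDef := hpd.submatrix Sum.inr_injective
  refine (isStieltjes_integral_det_div_det hD hpd (by simp) hμ
    (mul_nonneg hb.le hsub)).congr fun z _ => ?_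
  rw [← integral_const_mul]
  refine setIntegral_congr_fun measurableSet_Ici fun t ht => ?_
  have hdensity := (hhess.add_smul_one t).inv_last_zero_div_eq
    (det_add_smul_one_pos_of_posDef hA ht).ne' (det_add_smul_one_pos_of_posDef hD ht).ne' j hb.ne'
  rw [subdiagProd_add_smul_one, ← fromBlocks_add_smul_one] at hdensity
  simp only [hdensity, ← mul_assoc, ← mul_pow, neg_mul_neg, one_mul, one_pow]

end Stieltjes

/-- **Lemma 3.4 (first part)**: in the block matrix setup
`T = [[T₁, β e_m e₁ᵀ], [β e₁ e_mᵀ, S]]` with `T` positive definite and `T₁` tridiagonal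
with positive subdiagonal entries, and for a positive Borel measure `μ` on `[0,∞)` with
`∫ 1/(1+t) dμ(t) < ∞`, the function
`f₂(z) = ∫ (ε(t)/(β d(t))) · 1/(z+t) dμ(t)` is such that `(−1)^m f₂` is a Stieltjes
function; in particular `f₂` has constant sign on `(0,∞)` and `|f₂|` is monotonically
decreasing on `(0,∞)`. -/
theorem f2_sign_flip_stieltjes
    {m k : ℕ} (hm : 1 ≤ m) (hk : 1 ≤ k)
    (T₁ : Matrix (Fin m) (Fin m) ℝ) (S : Matrix (Fin k) (Fin k) ℝ)
    (hT₁ : T₁.IsSymm) (hS : S.IsSymm)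
    (htri : ∀ i j : Fin m, ((i : ℕ) + 1 < (j : ℕ) ∨ (j : ℕ) + 1 < (i : ℕ)) → T₁ i j = 0)
    (hsub : ∀ i : Fin (m - 1),
      0 < T₁ ⟨(i : ℕ) + 1, by have := i.isLt; omega⟩ ⟨(i : ℕ), by have := i.isLt; omega⟩)
    (β : ℝ) (hβ : 0 < β)
    (T : Matrix (Fin m ⊕ Fin k) (Fin m ⊕ Fin k) ℝ)
    (hT : T = Matrix.fromBlocks T₁
      (Matrix.of fun i j => if i = (⟨m - 1, by omega⟩ : Fin m) ∧ j = (⟨0, hk⟩ : Fin k) then β else 0)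
      (Matrix.of fun i j => if i = (⟨0, hk⟩ : Fin k) ∧ j = (⟨m - 1, by omega⟩ : Fin m) then β else 0)
      S)
    (hTpd : T.PosDef)
    (γ δ ε d : ℝ → ℝ)
    (hγ : ∀ t, γ t = (T₁ + t • 1)⁻¹ ⟨m - 1, by omega⟩ ⟨m - 1, by omega⟩)
    (hδ : ∀ t, δ t = (S + t • 1)⁻¹ ⟨0, hk⟩ ⟨0, hk⟩)
    (hε : ∀ t, ε t = (T₁ + t • 1)⁻¹ ⟨m - 1, by omega⟩ ⟨0, hm⟩)
    (hd : ∀ t, d t = γ t * δ t - 1 / β ^ 2)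
    (μ : Measure ℝ)
    (hμ : MeasureTheory.IntegrableOn (fun t => (1 + t)⁻¹) (Set.Ici 0) μ)
    (f₂ : ℝ → ℝ)
    (hf₂ : ∀ z : ℝ, 0 < z →
      f₂ z = ∫ t in Set.Ici (0 : ℝ), (ε t / (β * d t)) * (z + t)⁻¹ ∂μ) :
    (∃ ν : Measure ℝ,
      MeasureTheory.IntegrableOn (fun t => (1 + t)⁻¹) (Set.Ici 0) ν ∧
      ∀ z : ℝ, 0 < z →
        (-1 : ℝ) ^ m * f₂ z = ∫ t in Set.Ici (0 : ℝ), (z + t)⁻¹ ∂ν) ∧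
    ((∀ z : ℝ, 0 < z → 0 ≤ f₂ z) ∨ (∀ z : ℝ, 0 < z → f₂ z ≤ 0)) ∧
    (∀ z₁ z₂ : ℝ, 0 < z₁ → z₁ ≤ z₂ → |f₂ z₂| ≤ |f₂ z₁|) := by
  obtain ⟨n, rfl⟩ := Nat.exists_eq_add_of_le' hm
  have hblocks : T = fromBlocks T₁ (single (Fin.last n) ⟨0, hk⟩ β)
      (single ⟨0, hk⟩ (Fin.last n) β) S := by
    rw [hT]
    congr 1 <;> ext i j <;> simp [single_apply, eq_comm, Fin.last]
  have hhess : IsUpperHessenberg T₁ := fun i j hij => htri i j (.inr hij)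
  have hprod : 0 ≤ subdiagProd T₁ := Finset.prod_nonneg fun i _ => (hsub i).le
  have hstieltjes : IsStieltjes fun z => (-1) ^ (n + 1) * f₂ z := by
    refine (isStieltjes_neg_one_pow_mul_integral_inv_last_zero_div hβ (hblocks ▸ hTpd)
      hhess hprod hμ).congr fun z hz => ?_
    simp only [hf₂ z hz, hε, hd, hγ, hδ]
    rfl
  have hsign : (-1 : ℝ) ^ (n + 1) ≠ 0 := by simp
  exact ⟨hstieltjes, hstieltjes.nonneg_or_nonpos_of_const_mul hsign, fun z₁ z₂ hz₁ hz₁₂ =>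
    hstieltjes.antitoneOn_abs_of_const_mul hsign hz₁ (hz₁.trans_le hz₁₂) hz₁₂⟩
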